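/- arXiv:2401.14380 — 2 statements merged into one kernel-verified Lean document; each statement's English description precedes it below -/
import Mathlib

section
/- Let Γ be a tree on [n]. Then the coset splines generate Splines(Γ) as a ℂ[t]-module under the left action: every spline ρ on Γ can be written as a finite sum ρ = Σ c_{w,B} . f̄_w^B with coefficients c_{w,B} ∈ ℂ[t], where w ranges over S_n and B over subsets of E(Γ). -/
open MvPolynomial

/-- A spline on a simple graph `Γ` on `[n]`. -/
def IsSpline {n : ℕ} (Γ : SimpleGraph (Fin n))
    (ρ : Equiv.Perm (Fin n) → MvPolynomial (Fin n) ℂ) : Prop :=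
  ∀ (w : Equiv.Perm (Fin n)) (i j : Fin n), Γ.Adj i j →
    ρ w - ρ (w * Equiv.swap i j) ∈
      Ideal.span {(X (w i) - X (w j) : MvPolynomial (Fin n) ℂ)}

open Classical in
/-- The edges of `Γ`, recorded as ordered pairs `(i,j)` with `i < j`. -/
noncomputable def orderedEdges {n : ℕ} (Γ : SimpleGraph (Fin n)) :
    Finset (Fin n × Fin n) :=
  Finset.univ.filter fun p => Γ.Adj p.1 p.2 ∧ p.1 < p.2

/-- The subgroup `⟨B⟩` of `S_n` generated by the transpositions corresponding to the
edges in `B`. -/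
def edgeSubgroup {n : ℕ} (B : Finset (Fin n × Fin n)) : Subgroup (Equiv.Perm (Fin n)) :=
  Subgroup.closure {σ : Equiv.Perm (Fin n) | ∃ p ∈ B, σ = Equiv.swap p.1 p.2}

open Classical in
/-- The coset spline at the identity for `B ⊆ E(Γ)`:
`f̄_e^B(w) = ∏_{(i,j) ∈ E∖B, i<j} (t_{w(i)} − t_{w(j)})` if `w ∈ ⟨B⟩`, else `0`. -/
noncomputable def cosetSplineId {n : ℕ} (Γ : SimpleGraph (Fin n))
    (B : Finset (Fin n × Fin n)) :
    Equiv.Perm (Fin n) → MvPolynomial (Fin n) ℂ := fun w =>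
  if w ∈ edgeSubgroup B then
    ∏ p ∈ orderedEdges Γ \ B, (X (w p.1) - X (w p.2))
  else 0

/-- The dot action of `S_n`: `(w·ρ)(v) = w(ρ(w⁻¹ v))`. -/
noncomputable def dotAction {n : ℕ} (w : Equiv.Perm (Fin n))
    (ρ : Equiv.Perm (Fin n) → MvPolynomial (Fin n) ℂ) :
    Equiv.Perm (Fin n) → MvPolynomial (Fin n) ℂ :=
  fun v => rename (⇑w) (ρ (w⁻¹ * v))

/-- The coset spline at `w`: `f̄_w^B = w · f̄_e^B`. -/
noncomputable def cosetSpline {n : ℕ} (Γ : SimpleGraph (Fin n))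
    (w : Equiv.Perm (Fin n)) (B : Finset (Fin n × Fin n)) :
    Equiv.Perm (Fin n) → MvPolynomial (Fin n) ℂ :=
  dotAction w (cosetSplineId Γ B)

namespace SplineAux

variable {n : ℕ}

/-- product of the edge labels over `A` -/
noncomputable def al (A : Finset (Fin n × Fin n)) : MvPolynomial (Fin n) ℂ :=
  ∏ p ∈ A, (X p.1 - X p.2)

/-- ideal generated by the edge labels in `B` -/
noncomputable def JJ (B : Finset (Fin n × Fin n)) : Ideal (MvPolynomial (Fin n) ℂ) :=
  Ideal.span ((fun p : Fin n × Fin n => (X p.1 - X p.2 : MvPolynomial (Fin n) ℂ)) '' B)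

/-- ideal generated by products of `m` labels -/
noncomputable def II (E : Finset (Fin n × Fin n)) (m : ℕ) : Ideal (MvPolynomial (Fin n) ℂ) :=
  Ideal.span (al '' (E.powersetCard m : Set (Finset (Fin n × Fin n))))

lemma rename_sub_mem (J : Ideal (MvPolynomial (Fin n) ℂ)) (f : Fin n → Fin n)
    (hf : ∀ i, (X (f i) - X i : MvPolynomial (Fin n) ℂ) ∈ J) (h : MvPolynomial (Fin n) ℂ) :
    rename f h - h ∈ J := by
  have : ((Ideal.Quotient.mkₐ ℂ J).comp (rename f)) = Ideal.Quotient.mkₐ ℂ J := by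
    apply MvPolynomial.algHom_ext
    intro i
    simp only [AlgHom.comp_apply, rename_X, Ideal.Quotient.mkₐ_eq_mk]
    exact Ideal.Quotient.eq.2 (hf i)
  have h2 := DFunLike.congr_fun this h
  exact Ideal.Quotient.eq.1 h2

lemma swap_sub_mem (J : Ideal (MvPolynomial (Fin n) ℂ)) (i j : Fin n)
    (hJ : (X i - X j : MvPolynomial (Fin n) ℂ) ∈ J) (h : MvPolynomial (Fin n) ℂ) :
    rename (Equiv.swap i j) h - h ∈ J := by
  apply rename_sub_mem
  intro k
  rcases eq_or_ne k i with rfl | hi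
  · rw [Equiv.swap_apply_left, ← neg_sub]; exact J.neg_mem hJ
  rcases eq_or_ne k j with rfl | hj
  · rw [Equiv.swap_apply_right]; exact hJ
  · rw [Equiv.swap_apply_of_ne_of_ne hi hj, sub_self]; exact J.zero_mem

lemma perm_sub_mem (B : Finset (Fin n × Fin n)) (w : Equiv.Perm (Fin n))
    (hw : w ∈ edgeSubgroup B) : ∀ h : MvPolynomial (Fin n) ℂ, rename w h - h ∈ JJ B := by
  unfold edgeSubgroup at hw
  induction hw using Subgroup.closure_induction with
  | mem x hx =>
    obtain ⟨p, hp, rfl⟩ := hx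
    intro h
    have hmem : (X p.1 - X p.2 : MvPolynomial (Fin n) ℂ) ∈ JJ B :=
      Ideal.subset_span ⟨p, hp, rfl⟩
    exact swap_sub_mem _ _ _ hmem h
  | one => intro h; simp
  | mul x y _ _ hx hy =>
    intro h
    have e : rename (x * y : Equiv.Perm (Fin n)) h = rename x (rename y h) := by
      rw [rename_rename]; rfl
    rw [e, ← sub_add_sub_cancel _ (rename y h)]
    exact (JJ B).add_mem (hx _) (hy _)
  | inv x _ hx =>
    intro h
    have e : rename x (rename (x⁻¹ : Equiv.Perm (Fin n)) h) = h := by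
      rw [rename_rename]
      have : (x ∘ (x⁻¹ : Equiv.Perm (Fin n)) : Fin n → Fin n) = id := by
        funext i; simp
      rw [this, rename_id]; rfl
    have := (JJ B).neg_mem (hx (rename (x⁻¹ : Equiv.Perm (Fin n)) h))
    rwa [e, neg_sub] at this

/-- graph with edges `B` -/
def gr (B : Finset (Fin n × Fin n)) : SimpleGraph (Fin n) :=
  SimpleGraph.fromRel fun i j => (i, j) ∈ B

/-- collapsing map -/
noncomputable def col (B : Finset (Fin n × Fin n)) :
    MvPolynomial (Fin n) ℂ →ₐ[ℂ] MvPolynomial (gr B).ConnectedComponent ℂ :=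
  rename (gr B).connectedComponentMk

lemma reach_mem (B : Finset (Fin n × Fin n)) (i j : Fin n) (h : (gr B).Reachable i j) :
    (X i - X j : MvPolynomial (Fin n) ℂ) ∈ JJ B := by
  obtain ⟨p⟩ := h
  induction p with
  | nil => simp
  | cons hadj _ ih =>
    rw [← sub_add_sub_cancel]
    refine (JJ B).add_mem ?_ ih
    rw [gr, SimpleGraph.fromRel_adj] at hadj
    rcases hadj.2 with h | h
    · exact Ideal.subset_span ⟨_, h, rfl⟩
    · rw [← neg_sub]
      exact (JJ B).neg_mem (Ideal.subset_span ⟨_, h, rfl⟩)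

lemma mem_JJ_of_col (B : Finset (Fin n × Fin n)) (h : MvPolynomial (Fin n) ℂ)
    (hh : col B h = 0) : h ∈ JJ B := by
  have h1 := rename_sub_mem (JJ B) (fun i => ((gr B).connectedComponentMk i).out) (by
    intro i
    apply reach_mem
    apply SimpleGraph.ConnectedComponent.exact
    exact Quot.out_eq _) h
  have h2 : rename (fun i => ((gr B).connectedComponentMk i).out) h = 0 := by
    have : rename (fun i => ((gr B).connectedComponentMk i).out) h
      = rename (fun c : (gr B).ConnectedComponent => c.out) (col B h) := by
      rw [col, rename_rename]; rfl
    rw [this, hh, map_zero]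
  rw [h2, zero_sub] at h1
  simpa using (JJ B).neg_mem h1

lemma col_of_mem_JJ (B : Finset (Fin n × Fin n)) (h : MvPolynomial (Fin n) ℂ)
    (hh : h ∈ JJ B) : col B h = 0 := by
  have : JJ B ≤ RingHom.ker (col B) := by
    rw [JJ, Ideal.span_le]
    rintro _ ⟨p, hp, rfl⟩
    simp only [SetLike.mem_coe, RingHom.mem_ker, map_sub, col, rename_X]
    rw [sub_eq_zero]
    congr 1
    apply SimpleGraph.ConnectedComponent.sound
    rcases eq_or_ne p.1 p.2 with h | h
    · rw [h]
    · apply SimpleGraph.Adj.reachable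
      rw [gr, SimpleGraph.fromRel_adj]
      exact ⟨h, Or.inl hp⟩
  exact this hh

lemma col_al_ne (Γ : SimpleGraph (Fin n)) (hT : Γ.IsTree) (A : Finset (Fin n × Fin n))
    (hA : A ⊆ orderedEdges Γ) : col (orderedEdges Γ \ A) (al A) ≠ 0 := by
  rw [al, map_prod, Finset.prod_ne_zero_iff]
  intro p hp h0
  simp only [map_sub, col, rename_X, sub_eq_zero] at h0
  have h1 := SimpleGraph.ConnectedComponent.exact (MvPolynomial.X_injective h0)
  have hpE := hA hp
  simp only [orderedEdges, Finset.mem_filter, Finset.mem_univ, true_and] at hpE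
  have hb := (SimpleGraph.isAcyclic_iff_forall_adj_isBridge.1 hT.isAcyclic) hpE.1
  rw [SimpleGraph.isBridge_iff] at hb
  apply hb
  refine h1.mono ?_
  intro a b hab
  rw [gr, SimpleGraph.fromRel_adj] at hab
  have key : ∀ a b, (a, b) ∈ orderedEdges Γ \ A → Γ.Adj a b ∧ s(a, b) ≠ s(p.1, p.2) := by
    intro a b hab
    rw [Finset.mem_sdiff] at hab
    have h3 := hab.1
    simp only [orderedEdges, Finset.mem_filter, Finset.mem_univ, true_and] at h3
    refine ⟨h3.1, ?_⟩
    intro he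
    rw [Sym2.eq_iff] at he
    rcases he with ⟨rfl, rfl⟩ | ⟨rfl, rfl⟩
    · exact hab.2 hp
    · exact absurd h3.2 (not_lt_of_gt hpE.2)
  simp only [SimpleGraph.deleteEdges_adj, Set.mem_singleton_iff]
  rcases hab.2 with h | h
  · exact key a b h
  · have := key b a h
    exact ⟨this.1.symm, by rw [Sym2.eq_swap]; exact this.2⟩

lemma al_mul_mem (E A : Finset (Fin n × Fin n)) (m : ℕ) (hA : A ∈ E.powersetCard m)
    (h : MvPolynomial (Fin n) ℂ) (hh : h ∈ JJ (E \ A)) : al A * h ∈ II E (m + 1) := by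
  rw [Finset.mem_powersetCard] at hA
  unfold JJ at hh
  induction hh using Submodule.span_induction with
  | mem x hx =>
    obtain ⟨p, hp, rfl⟩ := hx
    rw [Finset.mem_coe, Finset.mem_sdiff] at hp
    apply Ideal.subset_span
    refine ⟨insert p A, ?_, ?_⟩
    · rw [Finset.mem_coe, Finset.mem_powersetCard, Finset.card_insert_of_notMem hp.2, hA.2]
      exact ⟨Finset.insert_subset hp.1 hA.1, rfl⟩
    · rw [al, Finset.prod_insert hp.2, mul_comm]; rfl
  | zero => simp
  | add x y _ _ hx hy => rw [mul_add]; exact Ideal.add_mem _ hx hy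
  | smul a x _ hx => rw [smul_eq_mul, mul_left_comm]; exact Ideal.mul_mem_left _ _ hx

lemma cosetSpline_apply (Γ : SimpleGraph (Fin n)) (u v : Equiv.Perm (Fin n))
    (B : Finset (Fin n × Fin n)) [Decidable (u⁻¹ * v ∈ edgeSubgroup B)] :
    cosetSpline Γ u B v =
      if u⁻¹ * v ∈ edgeSubgroup B then rename v (al (orderedEdges Γ \ B)) else 0 := by
  unfold cosetSpline dotAction cosetSplineId
  split_ifs with h
  · simp [al, map_prod]
  · simp

/-- splines as a submodule -/
def spl (Γ : SimpleGraph (Fin n)) :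
    Submodule (MvPolynomial (Fin n) ℂ) (Equiv.Perm (Fin n) → MvPolynomial (Fin n) ℂ) where
  carrier := {ρ | IsSpline Γ ρ}
  add_mem' := by
    intro a b ha hb w i j hij
    have := Ideal.add_mem _ (ha w i j hij) (hb w i j hij)
    simp only [Pi.add_apply]
    convert this using 1
    ring
  zero_mem' := by intro w i j _; simp
  smul_mem' := by
    intro c a ha w i j hij
    simp only [Pi.smul_apply, smul_eq_mul, ← mul_sub]
    exact Ideal.mul_mem_left _ _ (ha w i j hij)

lemma rename_mul (v s : Equiv.Perm (Fin n)) (h : MvPolynomial (Fin n) ℂ) :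
    rename (v * s : Equiv.Perm (Fin n)) h = rename v (rename s h) := by
  rw [rename_rename]; rfl

lemma rename_mem (v : Equiv.Perm (Fin n)) (i j : Fin n) (h : MvPolynomial (Fin n) ℂ)
    (hh : h ∈ Ideal.span {(X i - X j : MvPolynomial (Fin n) ℂ)}) :
    rename v h ∈ Ideal.span {(X (v i) - X (v j) : MvPolynomial (Fin n) ℂ)} := by
  rw [Ideal.mem_span_singleton] at *
  simpa using map_dvd (rename v) hh

lemma cosetSpline_spl (Γ : SimpleGraph (Fin n)) (u : Equiv.Perm (Fin n))
    (B : Finset (Fin n × Fin n)) :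
    cosetSpline Γ u B ∈ spl Γ := by
  classical
  intro v i j hij
  obtain ⟨p, hpE, hp⟩ : ∃ p ∈ orderedEdges Γ, p = (i, j) ∨ p = (j, i) := by
    rcases lt_or_gt_of_ne hij.ne with h | h
    · exact ⟨(i, j), by simp [orderedEdges, hij, h], Or.inl rfl⟩
    · exact ⟨(j, i), by simp [orderedEdges, hij.symm, h], Or.inr rfl⟩
  rw [cosetSpline_apply, cosetSpline_apply, rename_mul]
  by_cases hpB : p ∈ B
  · have hs : Equiv.swap i j ∈ edgeSubgroup B := by
      apply Subgroup.subset_closure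
      refine ⟨p, hpB, ?_⟩
      rcases hp with rfl | rfl
      · rfl
      · exact Equiv.swap_comm _ _
    rw [← mul_assoc, Subgroup.mul_mem_cancel_right _ hs]
    split_ifs
    · rw [← map_sub]
      apply rename_mem
      have := neg_mem (swap_sub_mem _ i j (Ideal.mem_span_singleton_self _)
        (al (orderedEdges Γ \ B)))
      rwa [neg_sub] at this
    · simp
  · have h1 : al (orderedEdges Γ \ B) ∈ Ideal.span {(X i - X j : MvPolynomial (Fin n) ℂ)} := by
      rw [Ideal.mem_span_singleton]
      have h2 : (X p.1 - X p.2 : MvPolynomial (Fin n) ℂ) ∣ al (orderedEdges Γ \ B) :=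
        Finset.dvd_prod_of_mem (fun p : Fin n × Fin n => (X p.1 - X p.2 : MvPolynomial (Fin n) ℂ))
          (Finset.mem_sdiff.2 ⟨hpE, hpB⟩)
      rcases hp with rfl | rfl
      · exact h2
      · rw [← neg_sub, neg_dvd]; exact h2
    have h3 : rename (Equiv.swap i j) (al (orderedEdges Γ \ B)) ∈
        Ideal.span {(X i - X j : MvPolynomial (Fin n) ℂ)} := by
      have := Ideal.add_mem _ (swap_sub_mem _ i j (Ideal.mem_span_singleton_self _)
        (al (orderedEdges Γ \ B))) h1
      rwa [sub_add_cancel] at this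
    apply Ideal.sub_mem
    · split_ifs
      · exact rename_mem _ _ _ _ h1
      · exact Ideal.zero_mem _
    · split_ifs
      · exact rename_mem _ _ _ _ h3
      · exact Ideal.zero_mem _

/-- span of the coset splines -/
noncomputable def cs (Γ : SimpleGraph (Fin n)) :
    Submodule (MvPolynomial (Fin n) ℂ) (Equiv.Perm (Fin n) → MvPolynomial (Fin n) ℂ) :=
  Submodule.span (MvPolynomial (Fin n) ℂ)
      {f : Equiv.Perm (Fin n) → MvPolynomial (Fin n) ℂ |
        ∃ (w : Equiv.Perm (Fin n)) (B : Finset (Fin n × Fin n)),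
          B ⊆ orderedEdges Γ ∧ f = cosetSpline Γ w B}

lemma cs_le (Γ : SimpleGraph (Fin n)) : cs Γ ≤ spl Γ := by
  rw [cs, Submodule.span_le]
  rintro _ ⟨w, B, _, rfl⟩
  exact cosetSpline_spl Γ w B

/-- coset representative -/
noncomputable def rep (B : Finset (Fin n × Fin n)) (v : Equiv.Perm (Fin n)) :
    Equiv.Perm (Fin n) := (v : Equiv.Perm (Fin n) ⧸ edgeSubgroup B).out

lemma rep_mem (B : Finset (Fin n × Fin n)) (v : Equiv.Perm (Fin n)) :
    (rep B v)⁻¹ * v ∈ edgeSubgroup B := by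
  rw [← QuotientGroup.eq]; exact QuotientGroup.out_eq' _

lemma tau_mem (Γ : SimpleGraph (Fin n)) (A : Finset (Fin n × Fin n)) (hA : A ⊆ orderedEdges Γ)
    (c : Equiv.Perm (Fin n) → MvPolynomial (Fin n) ℂ) :
    (fun v => c (rep (orderedEdges Γ \ A) v) * rename v (al A)) ∈ cs Γ := by
  classical
  have : (fun v => c (rep (orderedEdges Γ \ A) v) * rename v (al A)) =
      ∑ C : Equiv.Perm (Fin n) ⧸ edgeSubgroup (orderedEdges Γ \ A),
        c C.out • cosetSpline Γ C.out (orderedEdges Γ \ A) := by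
    funext v
    rw [Finset.sum_apply, Finset.sum_eq_single (v : Equiv.Perm (Fin n) ⧸ edgeSubgroup _)]
    · have := rep_mem (orderedEdges Γ \ A) v
      rw [Pi.smul_apply, cosetSpline_apply]
      unfold rep at *
      rw [if_pos this, Finset.sdiff_sdiff_eq_self hA, smul_eq_mul]
    · intro C _ hC
      rw [Pi.smul_apply, cosetSpline_apply, if_neg, smul_zero]
      intro h
      apply hC
      rw [← QuotientGroup.eq] at h
      rw [← h]; exact (QuotientGroup.out_eq' _).symm
    · simp
  rw [this]
  refine Submodule.sum_mem _ fun C _ => Submodule.smul_mem _ _ (Submodule.subset_span ?_)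
  exact ⟨_, _, Finset.sdiff_subset, rfl⟩

lemma rename_inv (w : Equiv.Perm (Fin n)) (h : MvPolynomial (Fin n) ℂ) :
    rename w (rename (w⁻¹ : Equiv.Perm (Fin n)) h) = h := by
  rw [← rename_mul, mul_inv_cancel, Equiv.Perm.coe_one, rename_id]; rfl

lemma rename_inv' (w : Equiv.Perm (Fin n)) (h : MvPolynomial (Fin n) ℂ) :
    rename (w⁻¹ : Equiv.Perm (Fin n)) (rename w h) = h := by
  rw [← rename_mul, inv_mul_cancel, Equiv.Perm.coe_one, rename_id]; rfl

lemma al_mem_JJ (E A A' : Finset (Fin n × Fin n)) (m : ℕ) (hA : A ∈ E.powersetCard m)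
    (hA' : A' ∈ E.powersetCard m) (hne : A' ≠ A) : al A' ∈ JJ (E \ A) := by
  rw [Finset.mem_powersetCard] at hA hA'
  obtain ⟨p, hp, hpA⟩ : ∃ p ∈ A', p ∉ A := by
    by_contra! hcon
    exact hne (Finset.eq_of_subset_of_card_le hcon (by omega))
  have : (X p.1 - X p.2 : MvPolynomial (Fin n) ℂ) ∣ al A' :=
    Finset.dvd_prod_of_mem (fun p : Fin n × Fin n => (X p.1 - X p.2 : MvPolynomial (Fin n) ℂ)) hp
  refine Ideal.mem_of_dvd _ this (Ideal.subset_span ⟨p, ?_, rfl⟩)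
  exact Finset.mem_coe.2 (Finset.mem_sdiff.2 ⟨hA'.1 hp, hpA⟩)

lemma step (Γ : SimpleGraph (Fin n)) (hT : Γ.IsTree) (m : ℕ)
    (ρ : Equiv.Perm (Fin n) → MvPolynomial (Fin n) ℂ) (hρ : ρ ∈ spl Γ)
    (hm : ∀ w : Equiv.Perm (Fin n), rename (w⁻¹ : Equiv.Perm (Fin n)) (ρ w) ∈
      II (orderedEdges Γ) m) :
    ∃ σ ∈ cs Γ, ∀ w : Equiv.Perm (Fin n), rename (w⁻¹ : Equiv.Perm (Fin n)) ((ρ - σ) w) ∈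
      II (orderedEdges Γ) (m + 1) := by
  classical
  set E := orderedEdges Γ with hE
  have h1 : ∀ w : Equiv.Perm (Fin n), ∃ c : Finset (Fin n × Fin n) → MvPolynomial (Fin n) ℂ,
      ∑ A ∈ E.powersetCard m, c A • al A = rename (w⁻¹ : Equiv.Perm (Fin n)) (ρ w) := by
    intro w
    obtain ⟨c, hc⟩ := (Submodule.mem_span_image_finset_iff_exists_fun _).1 (hm w)
    refine ⟨fun A => if hA : A ∈ E.powersetCard m then c ⟨A, hA⟩ else 0, ?_⟩
    rw [← hc, ← Finset.sum_coe_sort]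
    refine Finset.sum_congr rfl fun A _ => ?_
    beta_reduce
    rw [dif_pos A.2]
  choose h hh using h1
  -- compatibility
  have hsw : ∀ B ⊆ E, ∀ p ∈ B, ∀ w : Equiv.Perm (Fin n),
      ∑ A ∈ E.powersetCard m, (h w A - h (w * Equiv.swap p.1 p.2) A) * al A ∈ JJ B := by
    intro B hB p hp w
    have hpE := hB hp
    have hadj : Γ.Adj p.1 p.2 := by
      simp only [hE, orderedEdges, Finset.mem_filter] at hpE
      exact hpE.2.1
    have hmem : (X p.1 - X p.2 : MvPolynomial (Fin n) ℂ) ∈ JJ B :=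
      Ideal.subset_span ⟨p, hp, rfl⟩
    have a1 := rename_mem w⁻¹ _ _ _ (hρ w p.1 p.2 hadj)
    have e1 : ∀ k, (w⁻¹ : Equiv.Perm (Fin n)) (w k) = k := fun k => by simp
    rw [e1, e1] at a1
    have a2 := (Ideal.span_singleton_le_iff_mem (JJ B)).2 hmem a1
    set s := Equiv.swap p.1 p.2 with hs
    have a3 : rename (w⁻¹ : Equiv.Perm (Fin n)) (ρ (w * s)) =
        rename s (rename ((w * s)⁻¹ : Equiv.Perm (Fin n)) (ρ (w * s))) := by
      rw [← rename_mul]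
      congr 2
      simp [mul_inv_rev, hs]
    rw [map_sub, a3, ← hh, ← hh] at a2
    have a4 := Ideal.add_mem _ a2 (swap_sub_mem _ _ _ hmem
      (∑ A ∈ E.powersetCard m, h (w * s) A • al A))
    rw [← hs, sub_add_sub_cancel, ← Finset.sum_sub_distrib] at a4
    simpa only [smul_eq_mul, ← sub_mul] using a4
  have hsw2 : ∀ A ∈ E.powersetCard m, ∀ p ∈ E \ A, ∀ w : Equiv.Perm (Fin n),
      h w A - h (w * Equiv.swap p.1 p.2) A ∈ JJ (E \ A) := by
    intro A hA p hp w
    have b1 := hsw (E \ A) Finset.sdiff_subset p hp w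
    have b2 := col_of_mem_JJ _ _ b1
    rw [map_sum, Finset.sum_eq_single A] at b2
    · rw [map_mul] at b2
      exact mem_JJ_of_col _ _ ((mul_eq_zero.1 b2).resolve_right
        (col_al_ne Γ hT A (Finset.mem_powersetCard.1 hA).1))
    · intro A' hA' hne
      rw [map_mul, col_of_mem_JJ _ _ (al_mem_JJ E A A' m hA hA' hne), mul_zero]
    · intro hn; exact absurd hA hn
  have hsw3 : ∀ A ∈ E.powersetCard m, ∀ x ∈ edgeSubgroup (E \ A), ∀ w : Equiv.Perm (Fin n),
      h w A - h (w * x) A ∈ JJ (E \ A) := by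
    intro A hA x hx
    unfold edgeSubgroup at hx
    induction hx using Subgroup.closure_induction with
    | mem x hx =>
      obtain ⟨p, hp, rfl⟩ := hx
      exact hsw2 A hA p hp
    | one => intro w; simp
    | mul x y _ _ hx hy =>
      intro w
      have := Ideal.add_mem _ (hx w) (hy (w * x))
      rwa [sub_add_sub_cancel, mul_assoc] at this
    | inv x _ hx =>
      intro w
      have := neg_mem (hx (w * x⁻¹))
      rwa [neg_sub, inv_mul_cancel_right] at this
  refine ⟨∑ A ∈ E.powersetCard m, (fun v =>
    (fun u : Equiv.Perm (Fin n) => rename u (h u A)) (rep (E \ A) v) * rename v (al A)), ?_, ?_⟩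
  · refine Submodule.sum_mem _ fun A hA => ?_
    exact tau_mem Γ A (Finset.mem_powersetCard.1 hA).1 (fun u : Equiv.Perm (Fin n) => rename u (h u A))
  · intro w
    rw [Pi.sub_apply, map_sub, ← hh, Finset.sum_apply, map_sum, ← Finset.sum_sub_distrib]
    refine Ideal.sum_mem _ fun A hA => ?_
    rw [map_mul, rename_inv', smul_eq_mul, ← sub_mul, mul_comm]
    refine al_mul_mem E A m hA _ ?_
    have hr := rep_mem (E \ A) w
    set u := rep (E \ A) w
    have c1 := hsw3 A hA _ hr u
    rw [mul_inv_cancel_left] at c1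
    have c2 := perm_sub_mem (E \ A) _ ((edgeSubgroup (E \ A)).inv_mem hr) (h u A)
    rw [mul_inv_rev, inv_inv, rename_mul] at c2
    have := neg_mem (Ideal.add_mem _ c1 c2)
    convert this using 1
    ring

lemma iter (Γ : SimpleGraph (Fin n)) (hT : Γ.IsTree)
    (ρ : Equiv.Perm (Fin n) → MvPolynomial (Fin n) ℂ) (hρ : ρ ∈ spl Γ) (m : ℕ) :
    ∃ σ ∈ cs Γ, ∀ w : Equiv.Perm (Fin n), rename (w⁻¹ : Equiv.Perm (Fin n)) ((ρ - σ) w) ∈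
      II (orderedEdges Γ) m := by
  induction m with
  | zero =>
    refine ⟨0, Submodule.zero_mem _, fun w => ?_⟩
    have : II (orderedEdges Γ) 0 = ⊤ := by
      rw [Ideal.eq_top_iff_one]
      exact Ideal.subset_span ⟨∅, by simp, by simp [al]⟩
    rw [this]; trivial
  | succ m ih =>
    obtain ⟨σ, hσ, h⟩ := ih
    obtain ⟨τ, hτ, h'⟩ := step Γ hT m (ρ - σ) (Submodule.sub_mem _ hρ (cs_le Γ hσ)) h
    refine ⟨σ + τ, Submodule.add_mem _ hσ hτ, ?_⟩
    rwa [← sub_sub]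

end SplineAux

/-- If `Γ` is a tree, then the coset splines generate the splines on `Γ` as a module over
`ℂ[t₁,…,tₙ]` (acting pointwise, i.e. via the left action): every spline lies in the
`ℂ[t]`-span of the coset splines `f̄_w^B`, `w ∈ S_n`, `B ⊆ E(Γ)`. -/
theorem spline_mem_span_cosetSplines {n : ℕ} (Γ : SimpleGraph (Fin n)) (hT : Γ.IsTree)
    (ρ : Equiv.Perm (Fin n) → MvPolynomial (Fin n) ℂ) (hρ : IsSpline Γ ρ) :
    ρ ∈ Submodule.span (MvPolynomial (Fin n) ℂ)
      {f : Equiv.Perm (Fin n) → MvPolynomial (Fin n) ℂ |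
        ∃ (w : Equiv.Perm (Fin n)) (B : Finset (Fin n × Fin n)),
          B ⊆ orderedEdges Γ ∧ f = cosetSpline Γ w B} := by
  obtain ⟨σ, hσ, h⟩ := SplineAux.iter Γ hT ρ hρ ((orderedEdges Γ).card + 1)
  have : ρ = σ := by
    funext w
    have hw := h w
    rw [SplineAux.II, Finset.powersetCard_eq_empty.2 (Nat.lt_succ_self _)] at hw
    simp only [Finset.coe_empty, Set.image_empty, Ideal.span_empty, Ideal.mem_bot] at hw
    have h2 := SplineAux.rename_inv w ((ρ - σ) w)
    rw [hw, map_zero] at h2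
    exact sub_eq_zero.1 h2.symm
  rw [this]
  exact hσ
end

section
/- Let Γ be a connected simple graph on [n]. Then every spline ρ ∈ Splines(Γ)^1 (i.e., all values ρ(w) homogeneous linear or zero) is a ℂ-linear combination of the splines in F_Γ := {t̄_i : i ∈ [n]} ∪ {x̄_i : i ∈ [n]} ∪ {f̄_A^s : s = {i,j} a cut edge of Γ with i < j, A ⊆ [n], |A| = |V(G_s)|} ∪ {ȳ_{G,k}^j : j a cut vertex of Γ, G a connected component of Γ − j, k ∈ [n]}. -/
open MvPolynomial

/-- The spline with constant value `t_i`. -/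
noncomputable def tbar {n : ℕ} (i : Fin n) :
    Equiv.Perm (Fin n) → MvPolynomial (Fin n) ℂ := fun _ => X i

/-- The spline `x̄_i : w ↦ t_{w(i)}`. -/
noncomputable def xbar {n : ℕ} (i : Fin n) :
    Equiv.Perm (Fin n) → MvPolynomial (Fin n) ℂ := fun w => X (w i)

/-- The graph obtained from `Γ` by deleting all edges incident to the vertex `j`. -/
def delVertexEdges {n : ℕ} (Γ : SimpleGraph (Fin n)) (j : Fin n) : SimpleGraph (Fin n) :=
  Γ.deleteEdges {e : Sym2 (Fin n) | j ∈ e}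

open Classical in
/-- The spline `f̄_A^s` associated to a cut edge `s = {i,j}` with `i < j`, a connected
component `G` of the edge-deleted graph, and a set `A` with `|A| = |V(G)|`. -/
noncomputable def fbar {n : ℕ} (i j : Fin n) (A : Set (Fin n)) (G : Set (Fin n)) :
    Equiv.Perm (Fin n) → MvPolynomial (Fin n) ℂ := fun w =>
  if (⇑w) ⁻¹' A = G then X (w i) - X (w j) else 0

open Classical in
/-- The spline `ȳ_{G,k}^j` associated to a cut vertex `j`, a connected component `G` of
`Γ − j`, and `k ∈ [n]`. -/
noncomputable def ybar {n : ℕ} (j k : Fin n) (G : Set (Fin n)) :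
    Equiv.Perm (Fin n) → MvPolynomial (Fin n) ℂ := fun w =>
  if w⁻¹ k ∈ G then X k - X (w j) else 0

/-- The collection `F_Γ` of linear splines: the `t̄_i`, the `x̄_i`, the cut-edge splines
`f̄_A^s` (with `G_s` the component of the edge-deleted graph containing the smaller
endpoint `i`), and the cut-vertex splines `ȳ_{G,k}^j`. -/
def SpanningFamily {n : ℕ} (Γ : SimpleGraph (Fin n)) :
    Set (Equiv.Perm (Fin n) → MvPolynomial (Fin n) ℂ) :=
  {f | ∃ i : Fin n, f = tbar i} ∪
  {f | ∃ i : Fin n, f = xbar i} ∪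
  {f | ∃ i j : Fin n, i < j ∧ Γ.Adj i j ∧
      ¬ (Γ.deleteEdges {s(i, j)}).Connected ∧
      ∃ A : Set (Fin n),
        A.ncard = {y | (Γ.deleteEdges {s(i, j)}).Reachable i y}.ncard ∧
        f = fbar i j A {y | (Γ.deleteEdges {s(i, j)}).Reachable i y}} ∪
  {f | ∃ j : Fin n, ¬ (Γ.induce ({j}ᶜ : Set (Fin n))).Connected ∧
      ∃ v₀ : Fin n, v₀ ≠ j ∧ ∃ k : Fin n,
        f = ybar j k {y | (delVertexEdges Γ j).Reachable v₀ y}}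

namespace LinSpl

open Equiv

variable {n : ℕ}

lemma inv_app (w : Perm (Fin n)) (x : Fin n) : w⁻¹ (w x) = x := w.symm_apply_apply x

lemma app_inv (w : Perm (Fin n)) (x : Fin n) : w (w⁻¹ x) = x := w.apply_symm_apply x

/-- Invariance under right multiplication by a transposition. -/
def InvPair (Θ : Perm (Fin n) → ℂ) (u v : Fin n) : Prop :=
  ∀ w, Θ (w * swap u v) = Θ w

lemma InvPair.refl (Θ : Perm (Fin n) → ℂ) (u : Fin n) : InvPair Θ u u := by
  intro w; rw [swap_self]; exact congrArg Θ (mul_one w)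

lemma InvPair.symm {Θ : Perm (Fin n) → ℂ} {u v : Fin n} (h : InvPair Θ u v) :
    InvPair Θ v u := by
  intro w; rw [swap_comm]; exact h w

lemma InvPair.trans {Θ : Perm (Fin n) → ℂ} {u v x : Fin n} (h : InvPair Θ u v)
    (h' : InvPair Θ v x) : InvPair Θ u x := by
  by_cases huv : u = v
  · subst huv; exact h'
  by_cases hux : u = x
  · subst hux; exact InvPair.refl _ _
  by_cases hvx : v = x
  · subst hvx; exact h
  intro w
  have : swap u x = swap u v * swap v x * swap u v := by
    rw [swap_comm u v]
    ext z
    simp only [Perm.mul_apply, swap_apply_def]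
    grind
  rw [this, ← mul_assoc, ← mul_assoc, h, h', h]

lemma inv_of_pairs (Θ : Perm (Fin n) → ℂ) : ∀ (m : ℕ) (π : Perm (Fin n)),
    π.support.card ≤ m → (∀ x, InvPair Θ x (π x)) → ∀ w, Θ (w * π) = Θ w := by
  intro m
  induction m with
  | zero =>
    intro π hm _ w
    have : π = 1 := by
      rw [← Perm.support_eq_empty_iff]
      exact Finset.card_eq_zero.mp (Nat.le_zero.mp hm)
    rw [this, mul_one]
  | succ m ih =>
    intro π hm hR w
    by_cases h1 : π = 1
    · rw [h1, mul_one]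
    obtain ⟨x, hx⟩ : ∃ x, π x ≠ x := by
      by_contra hcon
      push Not at hcon
      exact h1 (Equiv.ext hcon)
    have hlt := Perm.card_support_swap_mul hx
    have hR' : ∀ z, InvPair Θ z ((swap x (π x) * π) z) := by
      intro z
      rw [Perm.mul_apply, swap_apply_def]
      split_ifs with h2 h3
      · have := hR z
        rw [h2] at this
        exact this.trans (hR x)
      · have : z = x := π.injective h3
        rw [this]; exact InvPair.refl _ _
      · exact hR z
    have := ih _ (by omega) hR' (w * swap x (π x))
    rw [hR x w, ← mul_assoc, mul_assoc w, swap_mul_self, mul_one] at this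
    exact this

lemma inv_of_perm (Θ : Perm (Fin n) → ℂ) (w w' : Perm (Fin n))
    (h : ∀ x, InvPair Θ x ((w⁻¹ * w') x)) : Θ w' = Θ w := by
  have := inv_of_pairs Θ _ (w⁻¹ * w') le_rfl h w
  rwa [mul_inv_cancel_left] at this

lemma const_of_pairs (Θ : Perm (Fin n) → ℂ) (h : ∀ u v, InvPair Θ u v) (w w' : Perm (Fin n)) :
    Θ w = Θ w' := inv_of_perm Θ w' w (fun x => h _ _)

/-! ### Branches -/

lemma del_adj (Γ : SimpleGraph (Fin n)) (p u v : Fin n) :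
    (delVertexEdges Γ p).Adj u v ↔ Γ.Adj u v ∧ u ≠ p ∧ v ≠ p := by
  unfold delVertexEdges
  rw [SimpleGraph.deleteEdges_adj]
  simp only [Set.mem_ofPred_eq, Sym2.mem_iff]
  grind

lemma reach_rel {H : SimpleGraph (Fin n)} (R : Fin n → Fin n → Prop) (hr : ∀ x, R x x)
    (ht : ∀ x y z, R x y → R y z → R x z) (hadj : ∀ x y, H.Adj x y → R x y)
    {u v : Fin n} (h : H.Reachable u v) : R u v := by
  obtain ⟨p⟩ := h
  induction p with
  | nil => exact hr _
  | cons h _ ih => exact ht _ _ _ (hadj _ _ h) ih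

/-- `G` is a connected component of `Γ - p`. -/
def IsBranch (Γ : SimpleGraph (Fin n)) (p : Fin n) (G : Finset (Fin n)) : Prop :=
  ∃ v₀, v₀ ≠ p ∧ ∀ y, y ∈ G ↔ (delVertexEdges Γ p).Reachable v₀ y

section branch
variable {Γ : SimpleGraph (Fin n)} {p : Fin n} {G : Finset (Fin n)}

lemma IsBranch.not_mem (h : IsBranch Γ p G) : p ∉ G := by
  obtain ⟨v₀, h0, hG⟩ := h
  rw [hG]
  intro hr
  have := reach_rel (fun x y => x = p ↔ y = p) (fun _ => Iff.rfl)
    (fun _ _ _ a b => a.trans b) (fun x y hxy => by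
      rw [del_adj] at hxy; simp [hxy.2.1, hxy.2.2]) hr
  simp [h0] at this

lemma IsBranch.closed (h : IsBranch Γ p G) {u v : Fin n} (hu : u ∈ G) (ha : Γ.Adj u v)
    (hv : v ≠ p) : v ∈ G := by
  have hup : u ≠ p := fun e => h.not_mem (e ▸ hu)
  obtain ⟨v₀, h0, hG⟩ := h
  rw [hG] at hu ⊢
  exact hu.trans (SimpleGraph.Adj.reachable ((del_adj _ _ _ _).2 ⟨ha, hup, hv⟩))

lemma IsBranch.mem_iff (h : IsBranch Γ p G) {u v : Fin n} (ha : Γ.Adj u v)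
    (hu : u ≠ p) (hv : v ≠ p) : u ∈ G ↔ v ∈ G :=
  ⟨fun hh => h.closed hh ha hv, fun hh => h.closed hh ha.symm hu⟩

lemma IsBranch.rel_in (h : IsBranch Γ p G) (R : Fin n → Fin n → Prop) (hr : ∀ x, R x x)
    (hs : ∀ x y, R x y → R y x)
    (ht : ∀ x y z, R x y → R y z → R x z)
    (hadj : ∀ x y, Γ.Adj x y → x ∈ G → y ∈ G → R x y) {u v : Fin n} (hu : u ∈ G) (hv : v ∈ G) :
    R u v := by
  have h' := h
  obtain ⟨v₀, h0, hG⟩ := h'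
  have key : (delVertexEdges Γ p).Reachable u v := ((hG u).1 hu).symm.trans ((hG v).1 hv)
  have := reach_rel (fun x y => (x ∈ G → y ∈ G) ∧ (x ∈ G → R x y)) (fun x => ⟨id, fun _ => hr x⟩)
    (fun x y z a b => ⟨b.1 ∘ a.1, fun hx => ht _ _ _ (a.2 hx) (b.2 (a.1 hx))⟩)
    (fun x y hxy => by
      rw [del_adj] at hxy
      exact ⟨fun hx => h.closed hx hxy.1 hxy.2.2,
        fun hx => hadj _ _ hxy.1 hx (h.closed hx hxy.1 hxy.2.2)⟩) key
  exact this.2 hu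

lemma IsBranch.rel_out (hΓ : Γ.Connected) (h : IsBranch Γ p G) (R : Fin n → Fin n → Prop)
    (hr : ∀ x, R x x) (hs : ∀ x y, R x y → R y x)
    (ht : ∀ x y z, R x y → R y z → R x z)
    (hadj : ∀ x y, Γ.Adj x y → x ∉ G → y ∉ G → R x y) {u v : Fin n} (hu : u ∉ G) (hv : v ∉ G) :
    R u v := by
  have key : ∀ u, u ∉ G → R u p := by
    intro u hu
    obtain ⟨q⟩ := hΓ.preconnected u p
    have hp := h.not_mem
    have : ∀ (a b : Fin n) (_ : Γ.Walk a b), b = p → a ∉ G → R a p := by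
      intro a b q
      induction q with
      | nil => intro e _; subst e; exact hr _
      | @cons a c b hac _ ih =>
        intro e ha
        by_cases hc : c ∈ G
        · have : a = p := by
            by_contra hne
            exact ha (h.closed hc hac.symm hne)
          subst this; exact hr _
        · exact ht _ _ _ (hadj _ _ hac ha hc) (ih e hc)
    exact this u p q rfl hu
  exact ht _ _ _ (key u hu) (hs _ _ (key v hv))

lemma IsBranch.exists_adj (hΓ : Γ.Connected) (h : IsBranch Γ p G) : ∃ j ∈ G, Γ.Adj p j := by
  by_contra hcon
  push Not at hcon
  have hp := h.not_mem
  obtain ⟨v₀, h0, hG⟩ := id h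
  have hv : v₀ ∈ G := (hG v₀).2 (SimpleGraph.Reachable.refl _)
  have := reach_rel (H := Γ) (fun x y => x ∈ G → y ∈ G) (fun _ => id)
    (fun _ _ _ a b => b ∘ a) (fun x y hxy hx => by
      by_cases hy : y = p
      · subst hy; exact absurd hxy.symm (hcon x hx)
      · exact h.closed hx hxy hy) (hΓ.preconnected v₀ p)
  exact hp (this hv)

lemma laminar (hΓ : Γ.Connected) {r q : Fin n} {G' : Finset (Fin n)} (h : IsBranch Γ p G)
    (h' : IsBranch Γ q G') (hr : r ∉ G) (hr' : r ∉ G') (hc : G.card ≤ G'.card)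
    (hne : ¬ (p = q ∧ G = G')) : insert p G ⊆ G' ∨ ∀ v ∈ insert p G, v ∉ G' := by
  by_cases hpq : p = q
  · subst hpq
    right
    intro v hv hv'
    rcases Finset.mem_insert.1 hv with e | hvG
    · exact h'.not_mem (e ▸ hv')
    apply hne
    refine ⟨rfl, ?_⟩
    obtain ⟨a, _, ha⟩ := h
    obtain ⟨b, _, hb⟩ := h'
    ext y
    rw [ha, hb]
    have h1 := (ha v).1 hvG
    have h2 := (hb v).1 hv'
    exact ⟨fun hy => (h2.trans h1.symm).trans hy, fun hy => (h1.trans h2.symm).trans hy⟩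
  by_cases hp : p ∈ G'
  · left
    have hq : q ∉ G := by
      intro hq
      have := h.rel_out hΓ (fun x y => x ∈ G' ↔ y ∈ G') (fun _ => Iff.rfl)
        (fun _ _ a => a.symm) (fun _ _ _ a b => a.trans b)
        (fun x y hxy hx hy => h'.mem_iff hxy (fun e => hx (e ▸ hq)) (fun e => hy (e ▸ hq)))
        h.not_mem hr
      exact hr' (this.1 hp)
    obtain ⟨j, hj, hpj⟩ := h.exists_adj hΓ
    have hjG' : j ∈ G' := h'.closed hp hpj (fun e => hq (e ▸ hj))
    intro v hv
    rcases Finset.mem_insert.1 hv with e | hvG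
    · exact e ▸ hp
    have := h.rel_in (fun x y => x ∈ G' ↔ y ∈ G') (fun _ => Iff.rfl)
        (fun _ _ a => a.symm) (fun _ _ _ a b => a.trans b)
        (fun x y hxy hx hy => h'.mem_iff hxy (fun e => hq (e ▸ hx)) (fun e => hq (e ▸ hy)))
        hj hvG
    exact this.1 hjG'
  · right
    intro v hv hv'
    rcases Finset.mem_insert.1 hv with e | hvG
    · exact hp (e ▸ hv')
    have hsub : G' ⊆ G := by
      intro u hu
      have := h'.rel_in (fun x y => x ∈ G ↔ y ∈ G) (fun _ => Iff.rfl)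
        (fun _ _ a => a.symm) (fun _ _ _ a b => a.trans b)
        (fun x y hxy hx hy => h.mem_iff hxy (fun e => hp (e ▸ hx)) (fun e => hp (e ▸ hy)))
        hv' hu
      exact this.1 hvG
    have heq := Finset.eq_of_subset_of_card_le hsub hc
    obtain ⟨j, hj, hqj⟩ := h'.exists_adj hΓ
    apply h'.not_mem
    rw [heq] at hj ⊢
    exact h.closed hj hqj.symm (fun e => hpq e.symm)

end branch

/-! ### Linear splines in position coordinates -/

/-- Linear splines, `φ w v` being the coefficient of `t_{w(v)}` in `ρ(w)`. -/
def LS (Γ : SimpleGraph (Fin n)) (φ : Perm (Fin n) → Fin n → ℂ) : Prop :=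
  ∀ w i j, Γ.Adj i j →
    (∀ v, v ≠ i → v ≠ j → φ (w * swap i j) v = φ w v) ∧
    φ (w * swap i j) i + φ (w * swap i j) j = φ w i + φ w j

/-- The polynomial-valued function with given coefficients. -/
noncomputable def toPoly : (Perm (Fin n) → Fin n → ℂ) →ₗ[ℂ]
    (Perm (Fin n) → MvPolynomial (Fin n) ℂ) where
  toFun φ := fun w => ∑ v, φ w v • X (w v)
  map_add' a b := by
    funext w; simp [add_smul, Finset.sum_add_distrib]
  map_smul' a b := by
    funext w; simp [Finset.smul_sum, mul_smul]

lemma toPoly_apply (φ : Perm (Fin n) → Fin n → ℂ) (w : Perm (Fin n)) :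
    toPoly φ w = ∑ v, φ w v • (X (w v) : MvPolynomial (Fin n) ℂ) := rfl

lemma LS.sub {Γ : SimpleGraph (Fin n)} {φ ψ : Perm (Fin n) → Fin n → ℂ} (h : LS Γ φ)
    (h' : LS Γ ψ) : LS Γ (φ - ψ) := by
  intro w i j hij
  obtain ⟨a, b⟩ := h w i j hij
  obtain ⟨a', b'⟩ := h' w i j hij
  refine ⟨fun v hi hj => ?_, ?_⟩
  · simp only [Pi.sub_apply, a v hi hj, a' v hi hj]
  · simp only [Pi.sub_apply]
    linear_combination b - b'

/-- Sum of the coefficients over a set of positions. -/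
noncomputable def Psi (φ : Perm (Fin n) → Fin n → ℂ) (G : Finset (Fin n)) (w : Perm (Fin n)) : ℂ :=
  ∑ v ∈ G, φ w v

section
variable {Γ : SimpleGraph (Fin n)} {φ : Perm (Fin n) → Fin n → ℂ} {p : Fin n}
  {G : Finset (Fin n)}

lemma psi_edge_in (hφ : LS Γ φ) {i j : Fin n} (hij : Γ.Adj i j) (hi : i ∈ G) (hj : j ∈ G) :
    InvPair (Psi φ G) i j := by
  intro w
  obtain ⟨a, b⟩ := hφ w i j hij
  have hj' : j ∈ G.erase i := Finset.mem_erase.2 ⟨hij.ne', hj⟩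
  unfold Psi
  rw [← Finset.add_sum_erase _ _ hi, ← Finset.add_sum_erase _ _ hj',
    ← Finset.add_sum_erase (a := i) G _ hi, ← Finset.add_sum_erase _ _ hj',
    ← add_assoc, ← add_assoc, b]
  congr 1
  apply Finset.sum_congr rfl
  intro v hv
  simp only [Finset.mem_erase] at hv
  exact a v hv.2.1 hv.1

lemma psi_edge_out (hφ : LS Γ φ) {i j : Fin n} (hij : Γ.Adj i j) (hi : i ∉ G) (hj : j ∉ G) :
    InvPair (Psi φ G) i j := by
  intro w
  obtain ⟨a, b⟩ := hφ w i j hij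
  unfold Psi
  apply Finset.sum_congr rfl
  intro v hv
  exact a v (fun e => hi (e ▸ hv)) (fun e => hj (e ▸ hv))

lemma psi_in (h : IsBranch Γ p G) (hφ : LS Γ φ) {i j : Fin n} (hi : i ∈ G) (hj : j ∈ G) :
    InvPair (Psi φ G) i j :=
  h.rel_in (InvPair (Psi φ G)) (InvPair.refl _) (fun _ _ => InvPair.symm)
    (fun _ _ _ => InvPair.trans) (fun _ _ hxy hx hy => psi_edge_in hφ hxy hx hy) hi hj

lemma psi_out (hΓ : Γ.Connected) (h : IsBranch Γ p G) (hφ : LS Γ φ) {i j : Fin n}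
    (hi : i ∉ G) (hj : j ∉ G) : InvPair (Psi φ G) i j :=
  h.rel_out hΓ (InvPair (Psi φ G)) (InvPair.refl _) (fun _ _ => InvPair.symm)
    (fun _ _ _ => InvPair.trans) (fun _ _ hxy hx hy => psi_edge_out hφ hxy hx hy) hi hj

lemma psi_cross (hφ : LS Γ φ) {i j : Fin n} (hij : Γ.Adj i j) (hi : i ∉ G) (hj : j ∈ G)
    (w : Perm (Fin n)) :
    Psi φ G w - Psi φ G (w * swap i j) = φ w j - φ (w * swap i j) j := by
  unfold Psi
  rw [← Finset.add_sum_erase _ _ hj, ← Finset.add_sum_erase (a := j) G _ hj]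
  have : ∑ x ∈ G.erase j, φ (w * swap i j) x = ∑ x ∈ G.erase j, φ w x := by
    apply Finset.sum_congr rfl
    intro v hv
    rw [Finset.mem_erase] at hv
    exact (hφ w i j hij).1 v (fun e => hi (e ▸ hv.2)) hv.1
  rw [this]; ring

/-- `φ · j` is invariant under transpositions of vertices connected in `Γ - j`. -/
lemma pos_inv (hφ : LS Γ φ) {j u v : Fin n} (h : (delVertexEdges Γ j).Reachable u v) :
    InvPair (fun w => φ w j) u v :=
  reach_rel (InvPair (fun w => φ w j)) (InvPair.refl _) (fun _ _ _ => InvPair.trans)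
    (fun x y hxy => by
      rw [del_adj] at hxy
      intro w
      exact (hφ w x y hxy.1).1 j hxy.2.1.symm hxy.2.2.symm) h

/-- Locality of a correction term. -/
def Loc (p : Fin n) (G : Finset (Fin n)) (σ : Perm (Fin n) → Fin n → ℂ) : Prop :=
  (∀ w v, v ∉ insert p G → σ w v = 0) ∧ ∀ w, ∑ v ∈ insert p G, σ w v = 0

lemma Loc.psi_zero {σ : Perm (Fin n) → Fin n → ℂ} (h : Loc p G σ) {G' : Finset (Fin n)}
    (hl : insert p G ⊆ G' ∨ ∀ v ∈ insert p G, v ∉ G') (w : Perm (Fin n)) : Psi σ G' w = 0 := by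
  unfold Psi
  rcases hl with hl | hl
  · rw [← h.2 w]
    symm
    exact Finset.sum_subset hl (fun v _ hv => h.1 w v hv)
  · apply Finset.sum_eq_zero
    intro v hv
    exact h.1 w v (fun hv' => hl v hv' hv)

end

/-! ### The correction terms -/

lemma sum_swap_in (d : Fin n → ℂ) (G : Finset (Fin n)) {i j : Fin n} (hi : i ∈ G) (hj : j ∈ G) :
    InvPair (fun w => ∑ v ∈ G, d (w v)) i j := by
  intro w
  apply Finset.sum_equiv (swap i j)
  · intro v
    rw [swap_apply_def]
    split_ifs with h1 h2
    · subst h1; simp [hi, hj]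
    · subst h2; simp [hi, hj]
    · rfl
  · intro v _; rfl

lemma sum_swap_out (d : Fin n → ℂ) (G : Finset (Fin n)) {i j : Fin n} (hi : i ∉ G) (hj : j ∉ G) :
    InvPair (fun w => ∑ v ∈ G, d (w v)) i j := by
  intro w
  apply Finset.sum_congr rfl
  intro v hv
  have h1 : v ≠ i := fun e => hi (e ▸ hv)
  have h2 : v ≠ j := fun e => hj (e ▸ hv)
  rw [Perm.mul_apply, swap_apply_of_ne_of_ne h1 h2]

lemma sum_swap_cross (d : Fin n → ℂ) (G : Finset (Fin n)) {i j : Fin n} (hi : i ∉ G) (hj : j ∈ G)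
    (w : Perm (Fin n)) :
    ∑ v ∈ G, d (w v) - ∑ v ∈ G, d ((w * swap i j) v) = d (w j) - d (w i) := by
  rw [← Finset.add_sum_erase _ _ hj, ← Finset.add_sum_erase (a := j) G _ hj]
  have : ∑ x ∈ G.erase j, d ((w * swap i j) x) = ∑ x ∈ G.erase j, d (w x) := by
    apply Finset.sum_congr rfl
    intro v hv
    rw [Finset.mem_erase] at hv
    have h1 : v ≠ i := fun e => hi (e ▸ hv.2)
    rw [Perm.mul_apply, swap_apply_of_ne_of_ne h1 hv.1]
  rw [this, Perm.mul_apply, swap_apply_right]; ring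

/-- Combination of the cut-vertex splines. -/
noncomputable def Yd (p : Fin n) (G : Finset (Fin n)) (d : Fin n → ℂ) :
    Perm (Fin n) → Fin n → ℂ := fun w v =>
  if v ∈ G then d (w v) else if v = p then - ∑ u ∈ G, d (w u) else 0

/-- Combination of the cut-edge splines. -/
noncomputable def Fd (p j : Fin n) (Ψ : Perm (Fin n) → ℂ) :
    Perm (Fin n) → Fin n → ℂ := fun w v =>
  if v = j then Ψ w else if v = p then - Ψ w else 0

section
variable {Γ : SimpleGraph (Fin n)} {φ : Perm (Fin n) → Fin n → ℂ} {p : Fin n}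
  {G : Finset (Fin n)}

lemma Yd_loc (h : IsBranch Γ p G) (d : Fin n → ℂ) : Loc p G (Yd p G d) := by
  have hp := h.not_mem
  constructor
  · intro w v hv
    rw [Finset.mem_insert, not_or] at hv
    simp [Yd, hv.1, hv.2]
  · intro w
    rw [Finset.sum_insert hp]
    have : ∑ v ∈ G, Yd p G d w v = ∑ v ∈ G, d (w v) := by
      apply Finset.sum_congr rfl
      intro v hv; simp [Yd, hv]
    rw [this]; simp [Yd, hp]

lemma Yd_psi (d : Fin n → ℂ) (w : Perm (Fin n)) : Psi (Yd p G d) G w = ∑ v ∈ G, d (w v) := by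
  apply Finset.sum_congr rfl
  intro v hv; simp [Yd, hv]

lemma Yd_LS (h : IsBranch Γ p G) (d : Fin n → ℂ) : LS Γ (Yd p G d) := by
  have hp := h.not_mem
  have main : ∀ w i j, Γ.Adj i j → (i ∈ G → j ∈ G ∨ j = p) →
      (i ∉ G → j ∉ G) →
    (∀ v, v ≠ i → v ≠ j → Yd p G d (w * swap i j) v = Yd p G d w v) ∧
    Yd p G d (w * swap i j) i + Yd p G d (w * swap i j) j = Yd p G d w i + Yd p G d w j := by
    intro w i j hij h1 h2
    by_cases hi : i ∈ G
    · rcases h1 hi with hj | hj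
      · have hs := sum_swap_in d G hi hj w
        simp only at hs
        refine ⟨fun v hvi hvj => ?_, ?_⟩
        · simp only [Yd]
          rw [hs, Perm.mul_apply, swap_apply_of_ne_of_ne hvi hvj]
        · simp [Yd, hi, hj, add_comm]
      · subst hj
        have hs := sum_swap_cross d G hp hi w
        rw [swap_comm] at hs
        refine ⟨fun v hvi hvj => ?_, ?_⟩
        · simp only [Yd, hvj, if_false]
          rw [Perm.mul_apply, swap_apply_of_ne_of_ne hvi hvj]
        · simp only [Yd, hi, hp, if_true, if_false]
          rw [Perm.mul_apply, swap_apply_left]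
          linear_combination hs
    · have hj := h2 hi
      have hs := sum_swap_out d G hi hj w
      simp only at hs
      refine ⟨fun v hvi hvj => ?_, ?_⟩
      · simp only [Yd]
        rw [hs, Perm.mul_apply, swap_apply_of_ne_of_ne hvi hvj]
      · simp only [Yd, hi, hj, if_false]
        rw [hs]
  intro w i j hij
  by_cases hj : j ∈ G ∧ i ∉ G
  · have hi : i = p := by
      by_contra hne
      exact hj.2 (h.closed hj.1 hij.symm hne)
    obtain ⟨a, b⟩ := main w j i hij.symm (fun _ => Or.inr hi) (fun hh => absurd hj.1 hh)
    rw [swap_comm] at a b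
    exact ⟨fun v hi hj => a v hj hi, by linear_combination b⟩
  · refine main w i j hij (fun hi => ?_) (fun hi hj' => hj ⟨hj', hi⟩)
    by_cases hjp : j = p
    · exact Or.inr hjp
    · exact Or.inl (h.closed hi hij hjp)

lemma Fd_loc (h : IsBranch Γ p G) {j : Fin n} (hj : j ∈ G) (Ψ : Perm (Fin n) → ℂ) :
    Loc p G (Fd p j Ψ) := by
  have hp := h.not_mem
  have hpj : p ≠ j := fun e => hp (e ▸ hj)
  constructor
  · intro w v hv
    rw [Finset.mem_insert, not_or] at hv
    have : v ≠ j := fun e => hv.2 (e ▸ hj)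
    simp [Fd, hv.1, this]
  · intro w
    rw [Finset.sum_insert hp]
    have : ∑ v ∈ G, Fd p j Ψ w v = Ψ w := by
      rw [Finset.sum_eq_single_of_mem j hj]
      · simp [Fd]
      · intro v hv hvj
        have : v ≠ p := fun e => hp (e ▸ hv)
        simp [Fd, hvj, this]
    rw [this]; simp [Fd, hpj]

lemma Fd_psi (h : IsBranch Γ p G) {j : Fin n} (hj : j ∈ G) (Ψ : Perm (Fin n) → ℂ)
    (w : Perm (Fin n)) : Psi (Fd p j Ψ) G w = Ψ w := by
  have hp := h.not_mem
  unfold Psi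
  rw [Finset.sum_eq_single_of_mem j hj]
  · simp [Fd]
  · intro v hv hvj
    have : v ≠ p := fun e => hp (e ▸ hv)
    simp [Fd, hvj, this]

lemma Fd_LS (hΓ : Γ.Connected) (h : IsBranch Γ p G) {j : Fin n} (hj : j ∈ G)
    (hu : ∀ k ∈ G, Γ.Adj p k → k = j) (hφ : LS Γ φ) : LS Γ (Fd p j (Psi φ G)) := by
  have hp := h.not_mem
  have hpj : p ≠ j := fun e => hp (e ▸ hj)
  intro w a b hab
  have hcase : InvPair (Psi φ G) a b ∨ (a = p ∧ b = j) ∨ (a = j ∧ b = p) := by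
    by_cases ha : a ∈ G
    · by_cases hb : b ∈ G
      · exact Or.inl (psi_in h hφ ha hb)
      · have hbp : b = p := by
          by_contra hne; exact hb (h.closed ha hab hne)
        exact Or.inr (Or.inr ⟨hu a ha (hbp ▸ hab.symm), hbp⟩)
    · by_cases hb : b ∈ G
      · have hap : a = p := by
          by_contra hne; exact ha (h.closed hb hab.symm hne)
        exact Or.inr (Or.inl ⟨hap, hu b hb (hap ▸ hab)⟩)
      · exact Or.inl (psi_out hΓ h hφ ha hb)
  rcases hcase with hc | ⟨rfl, rfl⟩ | ⟨rfl, rfl⟩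
  · have := hc w
    simp only [Fd, this]
    simp
  · refine ⟨fun v h1 h2 => by simp [Fd, h1, h2], by simp [Fd, hpj]⟩
  · refine ⟨fun v h1 h2 => by simp [Fd, h1, h2], by simp [Fd, hpj]⟩

/-- Additivity when the branch is attached by at least two edges. -/
lemma additive (hΓ : Γ.Connected) (h : IsBranch Γ p G) (hφ : LS Γ φ) {j j' : Fin n}
    (hj : j ∈ G) (hj' : j' ∈ G) (hjj : j ≠ j') (hpj : Γ.Adj p j) (hpj' : Γ.Adj p j') :
    ∃ d : Fin n → ℂ, ∀ w w', Psi φ G w - ∑ v ∈ G, d (w v) = Psi φ G w' - ∑ v ∈ G, d (w' v) := by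
  have hp := h.not_mem
  have hne : p ≠ j := hpj.ne
  have hne' : p ≠ j' := hpj'.ne
  set Δ : Perm (Fin n) → ℂ := fun w => Psi φ G w - Psi φ G (w * swap p j) with hΔ
  have comm : ∀ (w : Perm (Fin n)) (u v : Fin n), u ≠ p → u ≠ j → v ≠ p → v ≠ j →
      w * swap u v * swap p j = w * swap p j * swap u v := by
    intro w u v h1 h2 h3 h4
    rw [mul_assoc, mul_assoc]
    congr 1
    ext z
    simp only [Perm.mul_apply, swap_apply_def]
    grind
  have inv1 : ∀ u v, u ≠ p → u ≠ j → v ≠ p → v ≠ j → u ∈ G → v ∈ G → InvPair Δ u v := by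
    intro u v h1 h2 h3 h4 hu hv w
    simp only [hΔ]
    rw [comm w u v h1 h2 h3 h4, psi_in h hφ hu hv, psi_in h hφ hu hv]
  have inv2 : ∀ v, v ≠ p → v ∉ G → InvPair Δ v j' := by
    intro v h3 hv w
    have hvj : v ≠ j := fun e => hv (e ▸ hj)
    simp only [hΔ]
    rw [psi_cross hφ hpj hp hj, psi_cross hφ hpj hp hj, comm w v j' h3 hvj hne'.symm hjj.symm]
    have hr : (delVertexEdges Γ j).Reachable v j' := by
      have h1 : (delVertexEdges Γ j).Reachable v p :=
        h.rel_out hΓ (fun x y => (delVertexEdges Γ j).Reachable x y)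
          (fun _ => SimpleGraph.Reachable.refl _) (fun _ _ => SimpleGraph.Reachable.symm)
          (fun _ _ _ a b => SimpleGraph.Reachable.trans a b)
          (fun x y hxy hx hy => SimpleGraph.Adj.reachable ((del_adj _ _ _ _).2
            ⟨hxy, fun e => hx (e ▸ hj), fun e => hy (e ▸ hj)⟩)) hv hp
      exact h1.trans (SimpleGraph.Adj.reachable ((del_adj _ _ _ _).2 ⟨hpj', hne, hjj.symm⟩))
    have := pos_inv hφ hr
    have e1 := this w
    have e2 := this (w * swap p j)
    simp only at e1 e2
    rw [e1, e2]
  have inv : ∀ u v, u ≠ p → u ≠ j → v ≠ p → v ≠ j → InvPair Δ u v := by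
    have toj : ∀ u, u ≠ p → u ≠ j → InvPair Δ u j' := by
      intro u h1 h2
      by_cases hu : u ∈ G
      · exact inv1 u j' h1 h2 hne'.symm hjj.symm hu hj'
      · exact inv2 u h1 hu
    intro u v h1 h2 h3 h4
    exact (toj u h1 h2).trans (toj v h3 h4).symm
  have dep : ∀ w w' : Perm (Fin n), w p = w' p → w j = w' j → Δ w = Δ w' := by
    intro w w' h1 h2
    apply inv_of_perm
    intro x
    have e1 : (w'⁻¹ * w) p = p := by rw [Perm.mul_apply, h1, inv_app]
    have e2 : (w'⁻¹ * w) j = j := by rw [Perm.mul_apply, h2, inv_app]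
    by_cases hxp : x = p
    · rw [hxp, e1]; exact InvPair.refl _ _
    by_cases hxj : x = j
    · rw [hxj, e2]; exact InvPair.refl _ _
    refine inv _ _ hxp hxj (fun e => hxp ?_) (fun e => hxj ?_)
    · exact (w'⁻¹ * w).injective (e.trans e1.symm)
    · exact (w'⁻¹ * w).injective (e.trans e2.symm)
  have anti : ∀ w, Δ (w * swap p j) = - Δ w := by
    intro w
    simp only [hΔ]
    rw [mul_assoc, swap_mul_self, mul_one]; ring
  let d : Fin n → ℂ := fun b => if b = p then 0 else Δ (swap j b)
  have dp : d p = 0 := by simp [d]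
  have c1 : ∀ w : Perm (Fin n), w p = p → Δ w = d (w j) := by
    intro w hw
    have hwj : w j ≠ p := by
      intro e; exact hne (w.injective (hw.trans e.symm))
    simp only [d, hwj, if_false]
    apply dep
    · rw [hw, swap_apply_of_ne_of_ne hne hwj.symm]
    · rw [swap_apply_left]
  have c2 : ∀ w : Perm (Fin n), w j = p → Δ w = - d (w p) := by
    intro w hw
    have := c1 (w * swap p j) (by simp [hw])
    rw [anti] at this
    rw [Perm.mul_apply, swap_apply_right] at this
    rw [← this, neg_neg]
  have psi' : ∀ (w : Perm (Fin n)), Δ (w * swap j j') = Psi φ G w - Psi φ G (w * swap p j') := by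
    intro w
    simp only [hΔ]
    rw [psi_in h hφ hj hj']
    congr 1
    have : w * swap j j' * swap p j = w * swap p j' * swap j j' := by
      rw [mul_assoc, mul_assoc]
      congr 1
      ext z
      simp only [Perm.mul_apply, swap_apply_def]
      grind
    rw [this, psi_in h hφ hj hj']
  have c3 : ∀ w : Perm (Fin n), w j' = p → Δ w = d (w j) - d (w p) := by
    intro w hw
    have e1 := psi' w
    have e2 := psi' (w * swap p j)
    rw [c2 _ (by simp [hw])] at e1
    rw [c2 _ (by
      rw [Perm.mul_apply, swap_apply_left, Perm.mul_apply,
        swap_apply_of_ne_of_ne hne'.symm hjj.symm, hw])] at e2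
    have e3 : Psi φ G (w * swap p j * swap p j') = Psi φ G (w * swap p j') := by
      rw [← psi_in h hφ hj hj' (w * swap p j')]
      congr 1
      rw [mul_assoc, mul_assoc]
      congr 1
      ext z
      simp only [Perm.mul_apply, swap_apply_def]
      grind
    rw [e3] at e2
    simp only [Perm.mul_apply, swap_apply_of_ne_of_ne hne hne', swap_apply_left] at e1 e2
    simp only [hΔ]
    linear_combination e2 - e1
  have c : ∀ w : Perm (Fin n), Δ w = d (w j) - d (w p) := by
    intro w
    by_cases h1 : w p = p
    · rw [c1 w h1, h1, dp, sub_zero]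
    by_cases h2 : w j = p
    · rw [c2 w h2, h2, dp, zero_sub]
    have h3 : w⁻¹ p ≠ p := fun e => h1 (by
      have := congrArg w e; rw [app_inv] at this; exact this.symm)
    have h4 : w⁻¹ p ≠ j := fun e => h2 (by
      have := congrArg w e; rw [app_inv] at this; exact this.symm)
    have e := c3 (w * swap (w⁻¹ p) j') (by simp)
    rw [inv _ _ h3 h4 hne'.symm hjj.symm w, Perm.mul_apply, Perm.mul_apply,
      swap_apply_of_ne_of_ne h4.symm hjj, swap_apply_of_ne_of_ne h3.symm hne'] at e
    exact e
  refine ⟨d, ?_⟩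
  apply const_of_pairs (fun w => Psi φ G w - ∑ v ∈ G, d (w v))
  have i1 : ∀ u v, u ∈ G → v ∈ G → InvPair (fun w => Psi φ G w - ∑ v ∈ G, d (w v)) u v := by
    intro u v hu hv w
    have := sum_swap_in d G hu hv w
    simp only at this ⊢
    rw [this, psi_in h hφ hu hv]
  have i2 : ∀ u v, u ∉ G → v ∉ G → InvPair (fun w => Psi φ G w - ∑ v ∈ G, d (w v)) u v := by
    intro u v hu hv w
    have := sum_swap_out d G hu hv w
    simp only at this ⊢
    rw [this, psi_out hΓ h hφ hu hv]
  have i3 : InvPair (fun w => Psi φ G w - ∑ v ∈ G, d (w v)) p j := by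
    intro w
    have e1 := sum_swap_cross d G hp hj w
    have e2 := c w
    simp only [hΔ] at e2
    simp only
    linear_combination e1 - e2
  have toj : ∀ u, InvPair (fun w => Psi φ G w - ∑ v ∈ G, d (w v)) u j := by
    intro u
    by_cases hu : u ∈ G
    · exact i1 u j hu hj
    · exact (i2 u p hu hp).trans i3
  intro u v
  exact (toj u).trans (toj v).symm

/-! ### Membership in the span -/

lemma ybar_mem (h : IsBranch Γ p G) (k : Fin n) :
    ybar p k (G : Set (Fin n)) ∈ Submodule.span ℂ (SpanningFamily Γ) := by
  obtain ⟨v₀, h0, hG⟩ := id h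
  have hset : (G : Set (Fin n)) = {y | (delVertexEdges Γ p).Reachable v₀ y} := by
    ext y; simp [hG]
  by_cases hcon : (Γ.induce ({p}ᶜ : Set (Fin n))).Connected
  · have hall : ∀ y, y ≠ p → y ∈ G := by
      intro y hy
      rw [hG]
      have := hcon.preconnected ⟨v₀, h0⟩ ⟨y, hy⟩
      obtain ⟨q⟩ := this
      have key : ∀ (a b : ({p}ᶜ : Set (Fin n))) (_ : (Γ.induce ({p}ᶜ : Set (Fin n))).Walk a b),
          (delVertexEdges Γ p).Reachable a.1 b.1 := by
        intro a b q
        induction q with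
        | nil => exact SimpleGraph.Reachable.refl _
        | @cons a c b hac _ ih =>
          exact (SimpleGraph.Adj.reachable ((del_adj _ _ _ _).2 ⟨hac, a.2, c.2⟩)).trans ih
      exact key _ _ q
    have : ybar p k (G : Set (Fin n)) = tbar k - xbar p := by
      funext w
      simp only [ybar, tbar, xbar, Pi.sub_apply]
      split_ifs with hk
      · rfl
      · have : w⁻¹ k = p := by
          by_contra hne
          exact hk (hall _ hne)
        have : k = w p := by rw [← this, app_inv]
        rw [← this, sub_self]
    rw [this]
    apply Submodule.sub_mem
    · exact Submodule.subset_span (Or.inl (Or.inl (Or.inl ⟨k, rfl⟩)))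
    · exact Submodule.subset_span (Or.inl (Or.inl (Or.inr ⟨p, rfl⟩)))
  · apply Submodule.subset_span
    refine Or.inr ⟨p, hcon, v₀, h0, k, ?_⟩
    rw [hset]

lemma Yd_mem (h : IsBranch Γ p G) (d : Fin n → ℂ) :
    toPoly (Yd p G d) ∈ Submodule.span ℂ (SpanningFamily Γ) := by
  have hp := h.not_mem
  have : toPoly (Yd p G d) = ∑ k, d k • ybar p k (G : Set (Fin n)) := by
    funext w
    rw [toPoly_apply, Finset.sum_apply,
      ← Equiv.sum_comp w (fun k => (d k • ybar p k (G : Set (Fin n))) w)]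
    have e1 : ∀ v, (d (w v) • ybar p (w v) (G : Set (Fin n))) w =
        if v ∈ G then d (w v) • ((X (w v) : MvPolynomial (Fin n) ℂ) - X (w p)) else 0 := by
      intro v
      simp only [Pi.smul_apply, ybar, inv_app, Finset.mem_coe]
      split_ifs <;> simp
    have e2 : ∀ v, Yd p G d w v • (X (w v) : MvPolynomial (Fin n) ℂ) =
        (if v ∈ G then d (w v) • (X (w v) : MvPolynomial (Fin n) ℂ) else 0) -
        (if v = p then (∑ u ∈ G, d (w u)) • (X (w p) : MvPolynomial (Fin n) ℂ) else 0) := by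
      intro v
      simp only [Yd]
      by_cases hv : v ∈ G
      · have : v ≠ p := fun e => hp (e ▸ hv)
        simp [hv, this]
      · by_cases hvp : v = p
        · subst hvp; simp [hv]
        · simp [hv, hvp]
    rw [Finset.sum_congr rfl (fun v _ => e1 v), Finset.sum_congr rfl (fun v _ => e2 v),
      Finset.sum_sub_distrib]
    simp [Finset.sum_ite_mem, smul_sub, Finset.sum_smul]
  rw [this]
  exact Submodule.sum_mem _ (fun k _ => Submodule.smul_mem _ _ (ybar_mem h k))

lemma del_edge_props (hΓ : Γ.Connected) (h : IsBranch Γ p G) {j : Fin n} (hj : j ∈ G)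
    (hu : ∀ k ∈ G, Γ.Adj p k → k = j) :
    {y | (Γ.deleteEdges {s(p, j)}).Reachable j y} = (G : Set (Fin n)) ∧
    {y | (Γ.deleteEdges {s(p, j)}).Reachable p y} = (G : Set (Fin n))ᶜ ∧
    ¬ (Γ.deleteEdges {s(p, j)}).Connected := by
  have hp := h.not_mem
  have hadj : ∀ x y, (Γ.deleteEdges {s(p, j)}).Adj x y ↔
      Γ.Adj x y ∧ ¬ ((x = p ∧ y = j) ∨ (x = j ∧ y = p)) := by
    intro x y
    rw [SimpleGraph.deleteEdges_adj]
    simp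
  have hmem : ∀ x y, (Γ.deleteEdges {s(p, j)}).Reachable x y → (x ∈ G ↔ y ∈ G) := by
    intro x₀ y₀ hxy₀
    refine reach_rel (fun x y => x ∈ G ↔ y ∈ G) (fun _ => Iff.rfl)
      (fun _ _ _ a b => a.trans b) (fun x y hxy => ?_) hxy₀
    rw [hadj] at hxy
    obtain ⟨hxy, hn⟩ := hxy
    by_cases hx : x = p
    · subst hx
      refine ⟨fun hh => absurd hh hp, fun hy => ?_⟩
      exact absurd (Or.inl ⟨rfl, hu y hy hxy⟩) hn
    · by_cases hy : y = p
      · subst hy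
        refine ⟨fun hx => ?_, fun hh => absurd hh hp⟩
        exact absurd (Or.inr ⟨hu x hx hxy.symm, rfl⟩) hn
      · exact h.mem_iff hxy hx hy
  refine ⟨?_, ?_, ?_⟩
  · ext y
    simp only [Set.mem_ofPred_eq, Finset.mem_coe]
    refine ⟨fun hy => (hmem _ _ hy).1 hj, fun hy => ?_⟩
    exact h.rel_in (fun x y => (Γ.deleteEdges {s(p, j)}).Reachable x y)
      (fun _ => SimpleGraph.Reachable.refl _) (fun _ _ => SimpleGraph.Reachable.symm)
      (fun _ _ _ a b => SimpleGraph.Reachable.trans a b)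
      (fun x y hxy hx hy => SimpleGraph.Adj.reachable ((hadj _ _).2 ⟨hxy, by
        rintro (⟨e, _⟩ | ⟨_, e⟩)
        · exact hp (e ▸ hx)
        · exact hp (e ▸ hy)⟩)) hj hy
  · ext y
    simp only [Set.mem_ofPred_eq, Set.mem_compl_iff, Finset.mem_coe]
    refine ⟨fun hy hyG => hp ((hmem _ _ hy).2 hyG), fun hy => ?_⟩
    exact h.rel_out hΓ (fun x y => (Γ.deleteEdges {s(p, j)}).Reachable x y)
      (fun _ => SimpleGraph.Reachable.refl _) (fun _ _ => SimpleGraph.Reachable.symm)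
      (fun _ _ _ a b => SimpleGraph.Reachable.trans a b)
      (fun x y hxy hx hy => SimpleGraph.Adj.reachable ((hadj _ _).2 ⟨hxy, by
        rintro (⟨_, e⟩ | ⟨e, _⟩)
        · exact hy (e ▸ hj)
        · exact hx (e ▸ hj)⟩)) hp hy
  · intro hc
    exact hp ((hmem _ _ (hc.preconnected p j)).2 hj)

lemma preimage_eq_iff (w : Perm (Fin n)) (A S : Set (Fin n)) : (⇑w) ⁻¹' A = S ↔ A = w '' S := by
  constructor
  · rintro rfl
    exact (Set.image_preimage_eq A w.surjective).symm
  · rintro rfl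
    exact Set.preimage_image_eq S w.injective

/-- General membership for the cut-edge combinations. -/
lemma fbar_comb (i j : Fin n) (S : Set (Fin n)) (P : Submodule ℂ
    (Perm (Fin n) → MvPolynomial (Fin n) ℂ)) (hP : ∀ A : Set (Fin n), A.ncard = S.ncard →
      fbar i j A S ∈ P) (Ψ : Perm (Fin n) → ℂ)
    (hΨ : ∀ w w' : Perm (Fin n), w '' S = w' '' S → Ψ w = Ψ w') :
    (fun w => Ψ w • ((X (w i) : MvPolynomial (Fin n) ℂ) - X (w j))) ∈ P := by
  classical
  let g : Set (Fin n) → ℂ := fun A => if h : ∃ w : Perm (Fin n), w '' S = A then Ψ h.choose else 0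
  have hg : ∀ w : Perm (Fin n), g (w '' S) = Ψ w := by
    intro w
    have h : ∃ w' : Perm (Fin n), w' '' S = w '' S := ⟨w, rfl⟩
    simp only [g, dif_pos h]
    exact hΨ _ _ h.choose_spec
  have : (fun w : Perm (Fin n) => Ψ w • ((X (w i) : MvPolynomial (Fin n) ℂ) - X (w j))) =
      ∑ A : Set (Fin n), g A • fbar i j A S := by
    funext w
    rw [Finset.sum_apply, Finset.sum_eq_single (w '' S)]
    · simp only [Pi.smul_apply, hg, fbar]
      rw [if_pos ((preimage_eq_iff _ _ _).2 rfl)]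
    · intro A _ hA
      simp only [Pi.smul_apply, fbar]
      rw [if_neg (fun e => hA ((preimage_eq_iff _ _ _).1 e)), smul_zero]
    · intro hh; exact absurd (Finset.mem_univ _) hh
  rw [this]
  apply Submodule.sum_mem
  intro A _
  by_cases h : ∃ w : Perm (Fin n), w '' S = A
  · apply Submodule.smul_mem
    apply hP
    obtain ⟨w, rfl⟩ := h
    exact Set.ncard_image_of_injective S w.injective
  · simp only [g, dif_neg h, zero_smul]
    exact P.zero_mem

lemma Fd_mem (hΓ : Γ.Connected) (h : IsBranch Γ p G) {j : Fin n} (hj : j ∈ G)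
    (hpj : Γ.Adj p j) (hu : ∀ k ∈ G, Γ.Adj p k → k = j) (hφ : LS Γ φ) :
    toPoly (Fd p j (Psi φ G)) ∈ Submodule.span ℂ (SpanningFamily Γ) := by
  obtain ⟨h1, h2, h3⟩ := del_edge_props hΓ h hj hu
  have hne := hpj.ne
  have hpoly : toPoly (Fd p j (Psi φ G)) =
      fun w => Psi φ G w • ((X (w j) : MvPolynomial (Fin n) ℂ) - X (w p)) := by
    funext w
    rw [toPoly_apply]
    have e : ∀ v, Fd p j (Psi φ G) w v • (X (w v) : MvPolynomial (Fin n) ℂ) =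
        (if v = j then Psi φ G w • (X (w j) : MvPolynomial (Fin n) ℂ) else 0) -
        (if v = p then Psi φ G w • (X (w p) : MvPolynomial (Fin n) ℂ) else 0) := by
      intro v
      simp only [Fd]
      by_cases hv : v = j
      · subst hv; simp [hne.symm]
      · by_cases hvp : v = p
        · subst hvp; simp [hv]
        · simp [hv, hvp]
    rw [Finset.sum_congr rfl (fun v _ => e v), Finset.sum_sub_distrib]
    simp [smul_sub]
  have hΨ : ∀ w w' : Perm (Fin n), w '' (G : Set (Fin n)) = w' '' (G : Set (Fin n)) →
      Psi φ G w = Psi φ G w' := by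
    intro w w' hw
    apply inv_of_perm
    intro x
    have hx : x ∈ G ↔ (w'⁻¹ * w) x ∈ G := by
      have e1 : x ∈ G ↔ w x ∈ w '' (G : Set (Fin n)) := by
        rw [w.injective.mem_set_image]; rfl
      have e2 : w x ∈ w' '' (G : Set (Fin n)) ↔ (w'⁻¹ * w) x ∈ G := by
        have : w x = w' ((w'⁻¹ * w) x) := by rw [Perm.mul_apply, app_inv]
        rw [this, w'.injective.mem_set_image]; simp
      rw [e1, hw, e2]
    by_cases hxG : x ∈ G
    · exact psi_in h hφ hxG (hx.1 hxG)
    · exact psi_out hΓ h hφ hxG (fun hh => hxG (hx.2 hh))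
  rw [hpoly]
  rcases lt_or_gt_of_ne hne with hlt | hlt
  · have := fbar_comb p j ((G : Set (Fin n))ᶜ) (Submodule.span ℂ (SpanningFamily Γ))
      (fun A hA => Submodule.subset_span (Or.inl (Or.inr ⟨p, j, hlt, hpj, h3, A, by
        rw [h2]; exact hA, by rw [h2]⟩))) (Psi φ G) (fun w w' hw => hΨ w w' (by
          rw [Set.image_compl_eq w.bijective, Set.image_compl_eq w'.bijective] at hw
          exact compl_injective hw))
    have := Submodule.neg_mem _ this
    convert this using 1
    funext w
    simp only [Pi.neg_apply]
    rw [← smul_neg, neg_sub]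
  · rw [Sym2.eq_swap] at h1 h3
    exact fbar_comb j p (G : Set (Fin n)) (Submodule.span ℂ (SpanningFamily Γ))
      (fun A hA => Submodule.subset_span (Or.inl (Or.inr ⟨j, p, hlt, hpj.symm, h3, A, by
        rw [h1]; exact hA, by rw [h1]⟩))) (Psi φ G) hΨ

/-- Constancy. -/
def IsConst (Θ : Perm (Fin n) → ℂ) : Prop := ∀ w w', Θ w = Θ w'

lemma exists_correction (hΓ : Γ.Connected) (h : IsBranch Γ p G) (hφ : LS Γ φ) :
    ∃ σ, LS Γ σ ∧ Loc p G σ ∧ toPoly σ ∈ Submodule.span ℂ (SpanningFamily Γ) ∧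
      IsConst (Psi (φ - σ) G) := by
  have hsub : ∀ σ w, Psi (φ - σ) G w = Psi φ G w - Psi σ G w := by
    intro σ w
    simp [Psi, Finset.sum_sub_distrib]
  obtain ⟨j, hj, hpj⟩ := h.exists_adj hΓ
  by_cases hu : ∀ k ∈ G, Γ.Adj p k → k = j
  · refine ⟨Fd p j (Psi φ G), Fd_LS hΓ h hj hu hφ, Fd_loc h hj _, Fd_mem hΓ h hj hpj hu hφ, ?_⟩
    intro w w'
    rw [hsub, hsub, Fd_psi h hj, Fd_psi h hj, sub_self, sub_self]
  · push Not at hu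
    obtain ⟨j', hj', hpj', hne⟩ := hu
    obtain ⟨d, hd⟩ := additive hΓ h hφ hj hj' hne.symm hpj hpj'
    refine ⟨Yd p G d, Yd_LS h d, Yd_loc h d, Yd_mem h d, ?_⟩
    intro w w'
    rw [hsub, hsub, Yd_psi, Yd_psi]
    exact hd w w'

lemma reduce (hΓ : Γ.Connected) (r : Fin n) (hφ : LS Γ φ) (s : Finset (Fin n × Finset (Fin n))) :
    ∃ ψ, LS Γ ψ ∧ toPoly (φ - ψ) ∈ Submodule.span ℂ (SpanningFamily Γ) ∧
      ∀ b ∈ s, IsBranch Γ b.1 b.2 → r ∉ b.2 → IsConst (Psi ψ b.2) := by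
  classical
  refine Finset.induction_on_min_value (fun b : Fin n × Finset (Fin n) => b.2.card) s ?_ ?_
  · exact ⟨φ, hφ, by simp, by simp⟩
  · intro b s hb hmin ⟨ψ, hψ, hspan, hconst⟩
    by_cases hbr : IsBranch Γ b.1 b.2 ∧ r ∉ b.2
    · obtain ⟨σ, hσ, hloc, hσm, hσc⟩ := exists_correction hΓ hbr.1 hψ
      refine ⟨ψ - σ, hψ.sub hσ, ?_, ?_⟩
      · have : φ - (ψ - σ) = (φ - ψ) + σ := by abel
        rw [this, map_add]
        exact Submodule.add_mem _ hspan hσm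
      · intro c hc hcb hcr
        rcases Finset.mem_insert.1 hc with rfl | hcs
        · exact hσc
        · have hz := hloc.psi_zero (laminar hΓ hbr.1 hcb hbr.2 hcr (hmin c hcs) (by
            rintro ⟨e1, e2⟩
            exact hb ((Prod.ext e1 e2 : b = c) ▸ hcs)))
          have hsub : ∀ w, Psi (ψ - σ) c.2 w = Psi ψ c.2 w := by
            intro w
            have : Psi (ψ - σ) c.2 w = Psi ψ c.2 w - Psi σ c.2 w := by
              simp [Psi, Finset.sum_sub_distrib]
            rw [this, hz, sub_zero]
          intro w w'
          rw [hsub, hsub]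
          exact hconst c hcs hcb hcr w w'
    · refine ⟨ψ, hψ, hspan, ?_⟩
      intro c hc hcb hcr
      rcases Finset.mem_insert.1 hc with rfl | hcs
      · exact absurd ⟨hcb, hcr⟩ hbr
      · exact hconst c hcs hcb hcr

lemma all_const (hΓ : Γ.Connected) (r : Fin n) (hφ : LS Γ φ)
    (hc : ∀ p G, IsBranch Γ p G → r ∉ G → IsConst (Psi φ G)) :
    ∀ (j k : Fin n) (q : Γ.Walk j k), q.IsPath → k = r → IsConst (fun w => φ w j) := by
  classical
  -- edges into branches away from the root
  have good : ∀ i j, Γ.Adj i j → ¬ (delVertexEdges Γ i).Reachable j r →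
      InvPair (fun w => φ w i) i j := by
    intro i j hij hr w
    let G : Finset (Fin n) := Finset.univ.filter (fun y => (delVertexEdges Γ i).Reachable j y)
    have hG : ∀ y, y ∈ G ↔ (delVertexEdges Γ i).Reachable j y := by simp [G]
    have hb : IsBranch Γ i G := ⟨j, hij.ne', hG⟩
    have h0 := hc i G hb (fun h => hr ((hG r).1 h)) w (w * swap i j)
    have h1 := psi_cross hφ hij hb.not_mem ((hG j).2 (SimpleGraph.Reachable.refl _)) w
    have h2 := (hφ w i j hij).2
    simp only
    linear_combination h2 + h0 - h1
  have fin : ∀ j, (∀ i, Γ.Adj j i → InvPair (fun w => φ w j) j i) → IsConst (fun w => φ w j) := by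
    intro j hj
    have hedge : ∀ x y, Γ.Adj x y → InvPair (fun w => φ w j) x y := by
      intro x y hxy
      by_cases hx : x = j
      · subst hx; exact hj y hxy
      by_cases hy : y = j
      · subst hy; exact (hj x hxy.symm).symm
      intro w
      exact (hφ w x y hxy).1 j (Ne.symm hx) (Ne.symm hy)
    exact const_of_pairs _ (fun u v => reach_rel (InvPair (fun w => φ w j)) (InvPair.refl _)
      (fun _ _ _ => InvPair.trans) hedge (hΓ.preconnected u v))
  intro j k q
  induction q with
  | nil =>
    intro _ e
    subst e
    apply fin
    intro i hji
    apply good _ _ hji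
    intro hr
    have := reach_rel (fun x y => x = _ ↔ y = _) (fun _ => Iff.rfl)
      (fun _ _ _ a b => a.trans b) (fun x y hxy => by
        rw [del_adj] at hxy; exact iff_of_false hxy.2.1 hxy.2.2) hr
    exact hji.ne' (this.2 rfl)
  | @cons j k l hjk q ih =>
    intro hq e
    rw [SimpleGraph.Walk.cons_isPath_iff] at hq
    have hk := ih hq.1 e
    have hkr : (delVertexEdges Γ j).Reachable k r := by
      have : ∀ (a b : Fin n) (q : Γ.Walk a b), j ∉ q.support →
          (delVertexEdges Γ j).Reachable a b := by
        intro a b q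
        induction q with
        | nil => intro _; exact SimpleGraph.Reachable.refl _
        | @cons a c b hac q ih' =>
          intro hs
          rw [SimpleGraph.Walk.support_cons, List.mem_cons, not_or] at hs
          refine (SimpleGraph.Adj.reachable ((del_adj _ _ _ _).2 ⟨hac, Ne.symm hs.1, ?_⟩)).trans
            (ih' hs.2)
          intro e; subst e; exact hs.2 q.start_mem_support
      exact e ▸ this _ _ q hq.2
    have hjk' : InvPair (fun w => φ w j) j k := by
      intro w
      have h1 := (hφ w j k hjk).2
      have h2 := hk w (w * swap j k)
      simp only at h2 ⊢
      linear_combination h1 + h2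
    apply fin
    intro i hji
    by_cases hr : (delVertexEdges Γ j).Reachable i r
    · exact hjk'.trans (pos_inv hφ (hkr.trans hr.symm))
    · exact good _ _ hji hr

lemma main_LS (hΓ : Γ.Connected) (hφ : LS Γ φ) :
    toPoly φ ∈ Submodule.span ℂ (SpanningFamily Γ) := by
  classical
  obtain ⟨r⟩ := hΓ.nonempty
  obtain ⟨ψ, hψ, hspan, hconst⟩ := reduce hΓ r hφ Finset.univ
  have hall := all_const hΓ r hψ (fun p G hb hr => hconst (p, G) (Finset.mem_univ _) hb hr)
  have hc : ∀ j w, ψ w j = ψ 1 j := by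
    intro j w
    obtain ⟨q, hq⟩ := (hΓ.preconnected j r).exists_isPath
    exact hall j r q hq rfl w 1
  have : toPoly ψ = ∑ j, ψ 1 j • xbar j := by
    funext w
    rw [toPoly_apply, Finset.sum_apply]
    apply Finset.sum_congr rfl
    intro j _
    rw [hc j w]; rfl
  have hm : toPoly ψ ∈ Submodule.span ℂ (SpanningFamily Γ) := by
    rw [this]
    exact Submodule.sum_mem _ (fun j _ => Submodule.smul_mem _ _
      (Submodule.subset_span (Or.inl (Or.inl (Or.inr ⟨j, rfl⟩)))))
  have e : φ = (φ - ψ) + ψ := by abel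
  rw [e, map_add]
  exact Submodule.add_mem _ hspan hm

lemma linear_form {f : MvPolynomial (Fin n) ℂ} (hf : f.IsHomogeneous 1) :
    ∃ c : Fin n → ℂ, ∑ k, c k • (X k : MvPolynomial (Fin n) ℂ) = f := by
  have h : f ∈ homogeneousSubmodule (Fin n) ℂ 1 := hf
  rw [homogeneousSubmodule_one_eq_span_X] at h
  exact (Submodule.mem_span_range_iff_exists_fun ℂ).1 h

lemma LS_of_spline {ρ : Perm (Fin n) → MvPolynomial (Fin n) ℂ} (hρ : IsSpline Γ ρ)
    (hρφ : ρ = toPoly φ) : LS Γ φ := by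
  classical
  have key : ∀ w i j, Γ.Adj i j → ∀ e : Fin n → ℂ, e i = e j →
      ∑ v, φ w v * e v = ∑ v, φ (w * swap i j) v * e v := by
    intro w i j hij e he
    have h := hρ w i j hij
    rw [Ideal.mem_span_singleton] at h
    obtain ⟨q, hq⟩ := h
    have h2 := congrArg (eval (fun x => e (w⁻¹ x))) hq
    have e1 : ∀ v, e (swap i j v) = e v := by
      intro v
      rw [swap_apply_def]
      split_ifs with h1 h2
      · rw [h1, he]
      · rw [h2, he]
      · rfl
    simp [hρφ, toPoly_apply, smul_eval, he, e1] at h2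
    linear_combination h2
  intro w i j hij
  refine ⟨fun v hvi hvj => ?_, ?_⟩
  · have := key w i j hij (Pi.single v 1) (by
      rw [Pi.single_eq_of_ne hvi.symm, Pi.single_eq_of_ne hvj.symm])
    simp [Pi.single_apply] at this
    exact this.symm
  · have := key w i j hij (Pi.single i 1 + Pi.single j 1) (by
      simp [Pi.single_apply, hij.ne, hij.ne'])
    simp [Pi.single_apply, mul_add, Finset.sum_add_distrib] at this
    exact this.symm

end

end LinSpl

/-- Every spline on a connected graph `Γ` all of whose values are homogeneous linear (or
zero) is a `ℂ`-linear combination of the splines in `F_Γ`. -/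
theorem linear_splines_spanned {n : ℕ} (Γ : SimpleGraph (Fin n)) (hΓ : Γ.Connected)
    (ρ : Equiv.Perm (Fin n) → MvPolynomial (Fin n) ℂ)
    (hρ : IsSpline Γ ρ) (hlin : ∀ w, (ρ w).IsHomogeneous 1) :
    ρ ∈ Submodule.span ℂ (SpanningFamily Γ) := by
  choose c hc using fun w => LinSpl.linear_form (hlin w)
  have e : ρ = LinSpl.toPoly (fun w v => c w (w v)) := by
    funext w
    rw [LinSpl.toPoly_apply, Equiv.sum_comp w
      (fun k => c w k • (X k : MvPolynomial (Fin n) ℂ))]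
    exact (hc w).symm
  rw [e]
  exact LinSpl.main_LS hΓ (LinSpl.LS_of_spline hρ e)
end
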